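/- For every integer k ≥ 3, the kernel of the ℂ-algebra homomorphism ℂ[x_0,…,x_k,a,b,c] → ℂ[a,b,c,u,v]/(a·u² + b·u·v + c·v²) that fixes a, b, c and sends x_i ↦ u^{k−i}·v^i for 0 ≤ i ≤ k equals the ideal generated by the recurrence relations a·x_{i−1} + b·x_i + c·x_{i+1} for 1 ≤ i ≤ k−1 together with the 2×2 minor relations x_p·x_{q+1} − x_{p+1}·x_q for 0 ≤ p < q ≤ k−1. (This expresses that the section z = 0 of V(k) is the μ_k-quotient of the hypersurface a·u² + b·u·v + c·v² = 0 in 𝔸⁵.) -/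

import Mathlib

/-!
The section `z = 0` of `V(k)` as a `μ_k`-quotient: the kernel of the natural
map `ℂ[x_0,…,x_k,a,b,c] → ℂ[a,b,c,u,v]/(au² + buv + cv²)`, `x_i ↦ u^{k-i}v^i`,
is generated by the recurrence relations and the 2×2 minors.
-/

/-!
The inclusion of the ideal `J` of relations in the kernel is a direct computation. For the converse,
lift `φ` to `ψ : ℂ[x,a,b,c] → ℂ[a,b,c,u,v]` and construct a `ℂ`-linear map
`σ : ℂ[a,b,c,u,v] → ℂ[x,a,b,c]/J` such that `σ ∘ ψ` is the quotient map (`sigma_psi`) and `σ`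
vanishes on the ideal `(g)` (`sigma_g_mul`). If `φ f = 0`, then `ψ f = g h` for some `h`, so the
class of `f` modulo `J` is `σ (ψ f) = σ (g h) = 0`.

The map `σ` sends `a^α b^β c^γ u^i v^j` to zero unless `k ∣ i + j`, and otherwise to
`a^α b^β c^γ N n j`, where `n = (i + j) / k` and `N n w` is a normal form for the monomials in the
`x_i` of degree `n` and weight `w`. The minors give `x_t * N n w = N (n + 1) (w + t)` (`x_mul_N`),
which makes `σ` linear over `ℂ[x,a,b,c]`; together with the recurrence relations this also gives
`a N n j + b N n (j + 1) + c N n (j + 2) = 0` for `j + 2 ≤ k n` (`N_rec`), which is the vanishing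
on `g`.
-/

open MvPolynomial

noncomputable section

namespace VkZero

/-- The source ring `ℂ[x_0,…,x_k,a,b,c]`. -/
abbrev R (k : ℕ) : Type := MvPolynomial (Fin (k + 1) ⊕ Fin 3) ℂ

/-- The variable `x_i` in `R k` (junk value `0` out of range). -/
def xv (k i : ℕ) : R k := if h : i ≤ k then X (Sum.inl ⟨i, by omega⟩) else 0

/-- The variable `a` in `R k`. -/
def av (k : ℕ) : R k := X (Sum.inr 0)

/-- The variable `b` in `R k`. -/
def bv (k : ℕ) : R k := X (Sum.inr 1)

/-- The variable `c` in `R k`. -/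
def cv (k : ℕ) : R k := X (Sum.inr 2)

/-- The polynomial ring `ℂ[a,b,c,u,v]`; variables `0,1,2,3,4 = a,b,c,u,v`. -/
abbrev S : Type := MvPolynomial (Fin 5) ℂ

/-- The quadratic form `g = a u² + b u v + c v²`. -/
def g : S := X 0 * X 3 ^ 2 + X 1 * X 3 * X 4 + X 2 * X 4 ^ 2

/-- The hypersurface ring `ℂ[a,b,c,u,v]/(g)`. -/
abbrev T : Type := S ⧸ (Ideal.span ({g} : Set S))

/-- The ℂ-algebra homomorphism `ℂ[x_0,…,x_k,a,b,c] → ℂ[a,b,c,u,v]/(g)`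
fixing `a, b, c` and sending `x_i ↦ u^{k-i} v^i`. -/
def φ (k : ℕ) : R k →ₐ[ℂ] T :=
  aeval (fun j => match j with
    | Sum.inl i => Ideal.Quotient.mk _ ((X 3 : S) ^ (k - (i : ℕ)) * (X 4 : S) ^ (i : ℕ))
    | Sum.inr 0 => Ideal.Quotient.mk _ (X 0 : S)
    | Sum.inr 1 => Ideal.Quotient.mk _ (X 1 : S)
    | Sum.inr 2 => Ideal.Quotient.mk _ (X 2 : S))

end VkZero

namespace VkZero

/-- The ideal generated by the recurrence relations and the 2×2 minors. -/
def J (k : ℕ) : Ideal (R k) := Ideal.span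
      ({ P | ∃ i : ℕ, 1 ≤ i ∧ i ≤ k - 1 ∧
          P = av k * xv k (i - 1) + bv k * xv k i + cv k * xv k (i + 1) } ∪
       { P | ∃ p q : ℕ, p < q ∧ q ≤ k - 1 ∧
          P = xv k p * xv k (q + 1) - xv k (p + 1) * xv k q })

/-- The class of `x_i` modulo the relations. -/
def xb (k i : ℕ) : R k ⧸ J k := Ideal.Quotient.mk (J k) (xv k i)

/-- The class of `a` modulo the relations. -/
def ab (k : ℕ) : R k ⧸ J k := Ideal.Quotient.mk (J k) (av k)

/-- The class of `b` modulo the relations. -/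
def bb (k : ℕ) : R k ⧸ J k := Ideal.Quotient.mk (J k) (bv k)

/-- The class of `c` modulo the relations. -/
def cb (k : ℕ) : R k ⧸ J k := Ideal.Quotient.mk (J k) (cv k)

lemma xb_rec (k t : ℕ) (ht : t + 2 ≤ k) :
    ab k * xb k t + bb k * xb k (t + 1) + cb k * xb k (t + 2) = 0 := by
  simp only [ab, bb, cb, xb, ← map_mul, ← map_add]
  rw [Ideal.Quotient.eq_zero_iff_mem]
  exact Ideal.subset_span (Or.inl ⟨t + 1, by omega, by omega, rfl⟩)

lemma xb_minor_lt (k p q : ℕ) (hpq : p < q) (hq : q + 1 ≤ k) :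
    xb k p * xb k (q + 1) = xb k (p + 1) * xb k q := by
  simp only [xb, ← map_mul]
  rw [Ideal.Quotient.eq]
  exact Ideal.subset_span (Or.inr ⟨p, q, hpq, by omega, rfl⟩)

lemma xb_minor (k p q : ℕ) (hp : p + 1 ≤ k) (hq : q + 1 ≤ k) :
    xb k p * xb k (q + 1) = xb k (p + 1) * xb k q := by
  rcases lt_trichotomy p q with h | h | h
  · exact xb_minor_lt k p q h hq
  · subst h; ring
  · have := xb_minor_lt k q p h hp
    linear_combination -this

lemma xb_shift (k d p q : ℕ) (hp : p + d ≤ k) (hq : q + d ≤ k) :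
    xb k p * xb k (q + d) = xb k (p + d) * xb k q := by
  induction d generalizing p with
  | zero => rfl
  | succ d ih =>
    rw [← add_assoc, xb_minor k p (q + d) (by omega) (by omega), ih (p + 1) (by omega) (by omega)]
    congr 2; omega

/-- Modulo the minors, a product of two variables depends only on the sum of their indices. -/
lemma xb_mul_eq (k i j i' j' : ℕ) (hi : i ≤ k) (hj : j ≤ k) (hi' : i' ≤ k) (hj' : j' ≤ k)
    (h : i + j = i' + j') : xb k i * xb k j = xb k i' * xb k j' := by
  rcases le_total i i' with hle | hle
  · obtain ⟨d, rfl⟩ := Nat.exists_eq_add_of_le hle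
    obtain rfl : j = j' + d := by omega
    exact xb_shift k d i j' hi' hj
  · obtain ⟨d, rfl⟩ := Nat.exists_eq_add_of_le hle
    obtain rfl : j' = j + d := by omega
    exact (xb_shift k d i' j hi hj').symm

/-- The normal form of the monomials in the `x_i` of degree `n` and weight `w`, built greedily from
the largest available index. It is meaningful only for `w ≤ k * n`. -/
def N (k : ℕ) : ℕ → ℕ → R k ⧸ J k
  | 0, _ => 1
  | n + 1, w => xb k (min w k) * N k n (w - min w k)

lemma x_mul_N (k n t w : ℕ) (ht : t ≤ k) (hw : w ≤ k * n) :
    xb k t * N k n w = N k (n + 1) (w + t) := by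
  induction n generalizing t w with
  | zero =>
    obtain rfl : w = 0 := by simpa using hw
    simp [N, min_eq_left ht]
  | succ n ih =>
    rw [mul_add, mul_one] at hw
    rw [N.eq_2 k w n, N.eq_2 k (w + t) (n + 1)]
    -- The factor `x_M` of the right-hand side is split off `x_t * x_m`, leaving `x_(t+m-M)`.
    rw [← mul_assoc, xb_mul_eq k t (min w k) (min (w + t) k) (t + min w k - min (w + t) k)
      ht (by omega) (by omega) (by omega) (by omega), mul_assoc,
      ih _ _ (by omega) (by omega)]
    congr 2; omega

lemma N_rec (k n j : ℕ) (hk : 2 ≤ k) (hj : j + 2 ≤ k * n) :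
    ab k * N k n j + bb k * N k n (j + 1) + cb k * N k n (j + 2) = 0 := by
  cases n with
  | zero => simp at hj
  | succ n =>
    rw [mul_add, mul_one] at hj
    obtain ⟨t, w, ht, hw, rfl⟩ : ∃ t w, t + 2 ≤ k ∧ w ≤ k * n ∧ j = w + t :=
      ⟨min j (k - 2), j - min j (k - 2), by omega, by omega, by omega⟩
    rw [add_assoc w t 1, add_assoc w t 2, ← x_mul_N k n t w (by omega) hw,
      ← x_mul_N k n (t + 1) w (by omega) hw, ← x_mul_N k n (t + 2) w (by omega) hw]
    linear_combination N k n w * xb_rec k t ht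

/-- The lift of `φ` to the polynomial ring `ℂ[a,b,c,u,v]`. -/
def ψ (k : ℕ) : R k →ₐ[ℂ] S :=
  aeval (fun j => match j with
    | Sum.inl i => (X 3 : S) ^ (k - (i : ℕ)) * (X 4 : S) ^ (i : ℕ)
    | Sum.inr 0 => (X 0 : S)
    | Sum.inr 1 => (X 1 : S)
    | Sum.inr 2 => (X 2 : S))

lemma phi_eq (k : ℕ) (f : R k) : φ k f = Ideal.Quotient.mk (Ideal.span {g}) (ψ k f) := by
  have : φ k = (Ideal.Quotient.mkₐ ℂ (Ideal.span {g})).comp (ψ k) := by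
    apply MvPolynomial.algHom_ext
    rintro (i | i)
    · simp [φ, ψ]
    · fin_cases i <;> simp [φ, ψ]
  rw [this]; rfl

lemma psi_x (k i : ℕ) (hi : i ≤ k) : ψ k (xv k i) = X 3 ^ (k - i) * X 4 ^ i := by
  simp [ψ, xv, hi]

lemma psi_a (k : ℕ) : ψ k (av k) = X 0 := by simp [ψ, av]

lemma psi_b (k : ℕ) : ψ k (bv k) = X 1 := by simp [ψ, bv]

lemma psi_c (k : ℕ) : ψ k (cv k) = X 2 := by simp [ψ, cv]

lemma J_le_ker (k : ℕ) : J k ≤ RingHom.ker (φ k) := by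
  rw [J, Ideal.span_le]
  rintro P (⟨i, h1, h2, rfl⟩ | ⟨p, q, h1, h2, rfl⟩)
  · rw [SetLike.mem_coe, RingHom.mem_ker, phi_eq, Ideal.Quotient.eq_zero_iff_mem,
      Ideal.mem_span_singleton]
    obtain ⟨j, rfl⟩ := Nat.exists_eq_add_of_le' h1
    obtain ⟨d, rfl⟩ : ∃ d, k = j + 2 + d := ⟨k - (j + 2), by omega⟩
    refine ⟨X 3 ^ d * X 4 ^ j, ?_⟩
    simp only [map_add, map_mul, psi_a, psi_b, psi_c]
    rw [psi_x _ _ (by omega), psi_x _ _ (by omega), psi_x _ _ (by omega),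
      show j + 2 + d - (j + 1 - 1) = d + 2 by omega, show j + 2 + d - (j + 1) = d + 1 by omega,
      show j + 2 + d - (j + 1 + 1) = d by omega, show j + 1 - 1 = j by omega, g]
    ring
  · rw [SetLike.mem_coe, RingHom.mem_ker, phi_eq]
    obtain ⟨d, rfl⟩ : ∃ d, k = q + 1 + d := ⟨k - (q + 1), by omega⟩
    obtain ⟨e, rfl⟩ : ∃ e, q = p + 1 + e := ⟨q - (p + 1), by omega⟩
    refine (congrArg _ ?_).trans (map_zero (Ideal.Quotient.mk (Ideal.span {g})))
    rw [map_sub, map_mul, map_mul, psi_x _ _ (by omega), psi_x _ _ (by omega),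
      psi_x _ _ (by omega), psi_x _ _ (by omega),
      show p + 1 + e + 1 + d - p = d + e + 2 by omega,
      show p + 1 + e + 1 + d - (p + 1 + e + 1) = d by omega,
      show p + 1 + e + 1 + d - (p + 1) = d + e + 1 by omega,
      show p + 1 + e + 1 + d - (p + 1 + e) = d + 1 by omega]
    ring

/-- The value of `σ` on the monomial `u^i v^j`. -/
def M (k i j : ℕ) : R k ⧸ J k := if k ∣ i + j then N k ((i + j) / k) j else 0

lemma M_mul_x (k i j t : ℕ) (hk : 0 < k) (ht : t ≤ k) :
    M k (i + (k - t)) (j + t) = M k i j * xb k t := by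
  have e : i + (k - t) + (j + t) = i + j + k := by omega
  rw [M, M, e]
  by_cases h : k ∣ i + j
  · rw [if_pos h, if_pos (by simpa using h), Nat.add_div_right _ hk, mul_comm,
      x_mul_N k _ t j ht (by rw [Nat.mul_div_cancel' h]; omega)]
  · rw [if_neg h, if_neg (by simpa using h), zero_mul]

lemma M_rec (k i j : ℕ) (hk : 2 ≤ k) :
    ab k * M k (i + 2) j + bb k * M k (i + 1) (j + 1) + cb k * M k i (j + 2) = 0 := by
  have e1 : i + 1 + (j + 1) = i + 2 + j := by omega
  have e2 : i + (j + 2) = i + 2 + j := by omega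
  rw [M, M, M, e1, e2]
  by_cases h : k ∣ i + 2 + j
  · simp only [if_pos h]
    exact N_rec k _ j hk (by rw [Nat.mul_div_cancel' h]; omega)
  · simp [if_neg h]

/-- The `ℂ`-linear map `ℂ[a,b,c,u,v] → ℂ[x,a,b,c]/J` which inverts `ψ` modulo `J`; it kills the
monomials whose degree in `u, v` is not divisible by `k`. -/
def σ (k : ℕ) : S →ₗ[ℂ] (R k ⧸ J k) :=
  (basisMonomials (Fin 5) ℂ).constr ℂ
    (fun e => ab k ^ e 0 * bb k ^ e 1 * cb k ^ e 2 * M k (e 3) (e 4))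

lemma sigma_monomial (k : ℕ) (e : Fin 5 →₀ ℕ) :
    σ k (monomial e 1) = ab k ^ e 0 * bb k ^ e 1 * cb k ^ e 2 * M k (e 3) (e 4) := by
  have := (basisMonomials (Fin 5) ℂ).constr_basis ℂ
    (fun e => ab k ^ e 0 * bb k ^ e 1 * cb k ^ e 2 * M k (e 3) (e 4)) e
  rwa [coe_basisMonomials] at this

/-- Multiplication by a monomial shifts exponents under `σ`. -/
lemma sigma_mul_vars (k : ℕ) (e : Fin 5 →₀ ℕ) (p q r i j : ℕ) :
    σ k (monomial e 1 * (X 0 ^ p * X 1 ^ q * X 2 ^ r * X 3 ^ i * X 4 ^ j)) =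
      ab k ^ (e 0 + p) * bb k ^ (e 1 + q) * cb k ^ (e 2 + r) * M k (e 3 + i) (e 4 + j) := by
  simp only [X_pow_eq_monomial, monomial_mul, mul_one, sigma_monomial]
  simp

/-- A `ℂ`-linear identity on `ℂ[a,b,c,u,v]` can be checked on monomials. -/
lemma lin_ext {k : ℕ} (L L' : S →ₗ[ℂ] (R k ⧸ J k))
    (h : ∀ e, L (monomial e 1) = L' (monomial e 1)) (s : S) : L s = L' s := by
  have : L = L' := (basisMonomials (Fin 5) ℂ).ext (by simpa using h)
  rw [this]

lemma sigma_mul_psi_X (k : ℕ) (hk : 0 < k) (j : Fin (k + 1) ⊕ Fin 3) (s : S) :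
    σ k (s * ψ k (X j)) = σ k s * Ideal.Quotient.mk (J k) (X j) := by
  refine lin_ext (σ k ∘ₗ LinearMap.mulRight ℂ (ψ k (X j)))
    (LinearMap.mulRight ℂ (Ideal.Quotient.mk (J k) (X j)) ∘ₗ σ k) (fun e => ?_) s
  simp only [LinearMap.comp_apply, LinearMap.mulRight_apply]
  rcases j with ⟨t, ht⟩ | j
  · have hx : (X (Sum.inl ⟨t, ht⟩) : R k) = xv k t := by
      simp [xv, Nat.le_of_lt_succ ht]
    rw [hx, psi_x k t (by omega)]
    have := sigma_mul_vars k e 0 0 0 (k - t) t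
    simp only [pow_zero, one_mul, add_zero] at this
    rw [this, sigma_monomial, M_mul_x k _ _ t hk (by omega), ← mul_assoc]
    rfl
  · fin_cases j
    · have := sigma_mul_vars k e 1 0 0 0 0
      simp only [pow_zero, add_zero, mul_one, pow_one] at this
      change σ k (_ * ψ k (av k)) = _ * ab k
      rw [psi_a, this, sigma_monomial]; ring
    · have := sigma_mul_vars k e 0 1 0 0 0
      simp only [pow_zero, one_mul, add_zero, mul_one, pow_one] at this
      change σ k (_ * ψ k (bv k)) = _ * bb k
      rw [psi_b, this, sigma_monomial]; ring
    · have := sigma_mul_vars k e 0 0 1 0 0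
      simp only [pow_zero, one_mul, add_zero, mul_one, pow_one] at this
      change σ k (_ * ψ k (cv k)) = _ * cb k
      rw [psi_c, this, sigma_monomial]; ring

lemma sigma_one (k : ℕ) : σ k 1 = 1 := by
  have := sigma_monomial k 0
  simpa [M, N] using this

lemma sigma_psi (k : ℕ) (hk : 0 < k) (f : R k) : σ k (ψ k f) = Ideal.Quotient.mk (J k) f := by
  induction f using MvPolynomial.induction_on with
  | C r =>
    rw [← algebraMap_eq, AlgHom.commutes, Algebra.algebraMap_eq_smul_one, map_smul, sigma_one,
      Algebra.algebraMap_eq_smul_one]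
    rfl
  | add p q hp hq => rw [map_add, map_add, map_add, hp, hq]
  | mul_X p j hp => rw [map_mul (ψ k), sigma_mul_psi_X k hk, hp, map_mul]

lemma sigma_g_mul (k : ℕ) (hk : 2 ≤ k) (s : S) : σ k (g * s) = 0 := by
  refine lin_ext (σ k ∘ₗ LinearMap.mulLeft ℂ g) 0 (fun e => ?_) s
  simp only [LinearMap.comp_apply, LinearMap.mulLeft_apply, LinearMap.zero_apply]
  have h1 := sigma_mul_vars k e 1 0 0 2 0
  have h2 := sigma_mul_vars k e 0 1 0 1 1
  have h3 := sigma_mul_vars k e 0 0 1 0 2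
  simp only [pow_zero, one_mul, add_zero, mul_one, pow_one] at h1 h2 h3
  rw [mul_comm, g, mul_add, mul_add, map_add, map_add, h1, h2, h3]
  linear_combination (ab k ^ e 0 * bb k ^ e 1 * cb k ^ e 2) * M_rec k (e 3) (e 4) hk

end VkZero

open VkZero in
/-- For every `k ≥ 3`, the kernel of `φ k` is the ideal generated by the
recurrence relations `a x_{i-1} + b x_i + c x_{i+1}` (`1 ≤ i ≤ k-1`) together
with the 2×2 minors `x_p x_{q+1} - x_{p+1} x_q` (`0 ≤ p < q ≤ k-1`). -/
theorem ker_phi_eq_span (k : ℕ) (hk : 3 ≤ k) :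
    RingHom.ker (φ k) = Ideal.span
      ({ P | ∃ i : ℕ, 1 ≤ i ∧ i ≤ k - 1 ∧
          P = av k * xv k (i - 1) + bv k * xv k i + cv k * xv k (i + 1) } ∪
       { P | ∃ p q : ℕ, p < q ∧ q ≤ k - 1 ∧
          P = xv k p * xv k (q + 1) - xv k (p + 1) * xv k q }) := by
  refine le_antisymm (fun f hf => ?_) (J_le_ker k)
  rw [RingHom.mem_ker, phi_eq, Ideal.Quotient.eq_zero_iff_mem, Ideal.mem_span_singleton] at hf
  obtain ⟨h, hh⟩ := hf
  change f ∈ J k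
  rw [← Ideal.Quotient.eq_zero_iff_mem, ← sigma_psi k (by omega) f, hh, sigma_g_mul k (by omega)]
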